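/- arXiv:2605.21718 — 2 statements merged into one kernel-verified Lean document; each statement's English description precedes it below -/
import Mathlib

section
/- For every integer n ≥ 2 and every integer s ≥ 0 with 2^s ≤ n, the polynomial 1 + x^{2^s} does not divide num_B(n,x) in ℤ[x]. -/
open Polynomial Finset
open scoped Classical

/-- The binary partitions of `n`: partitions of `n` all of whose parts are powers of `2`. -/
noncomputable def binParts (n : ℕ) : Finset (Nat.Partition n) :=
  Finset.univ.filter (fun μ => ∀ i ∈ μ.parts, ∃ k : ℕ, i = 2 ^ k)

/-- `h_{B,λ}(x) = ∏_{k ≥ 0, 2^k ≤ n} (1+x^{2^k})^(⌊n/2^k⌋ - m_λ(2^k))` in `ℤ[x]`. -/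
noncomputable def hB (n : ℕ) (μ : Nat.Partition n) : Polynomial ℤ :=
  ∏ k ∈ (Finset.range (n + 1)).filter (fun k => 2 ^ k ≤ n),
    (1 + X ^ (2 ^ k)) ^ (n / 2 ^ k - μ.parts.count (2 ^ k))

/-- `G_B(n,x)`: the (normalized) gcd of the `h_{B,λ}(x)` over binary partitions `λ` of `n`. -/
noncomputable def GB (n : ℕ) : Polynomial ℤ :=
  (binParts n).gcd (hB n)

theorem GB_dvd_sum (n : ℕ) :
    ∃ q : Polynomial ℤ, (∑ μ ∈ binParts n, hB n μ) = GB n * q :=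
  exists_eq_mul_right_of_dvd (Finset.dvd_sum fun _ hμ => Finset.gcd_dvd hμ)

/-- `num_B(n,x) = (∑_{λ binary partition of n} h_{B,λ}(x)) / G_B(n,x)`. -/
noncomputable def numB (n : ℕ) : Polynomial ℤ :=
  (GB_dvd_sum n).choose

/-- The all-ones partition of `n`. -/
def onesPartition (n : ℕ) : Nat.Partition n :=
  Nat.Partition.ofSums n (Multiset.replicate n 1) (by simp)

theorem onesPartition_mem_binParts (n : ℕ) : onesPartition n ∈ binParts n := by
  simp only [binParts, Finset.mem_filter, Finset.mem_univ, true_and]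
  intro i hi
  have h1 : i = 1 := by
    rw [onesPartition, Nat.Partition.ofSums_parts] at hi
    exact Multiset.eq_of_mem_replicate (Multiset.mem_filter.mp hi).1
  exact ⟨0, by simp [h1]⟩

theorem GB_dvd_prod (n : ℕ) :
    ∃ q : Polynomial ℤ,
      (∏ k ∈ (Finset.range (n + 1)).filter (fun k => 2 ^ k ≤ n),
          ((1 : Polynomial ℤ) + X ^ (2 ^ k)) ^ (n / 2 ^ k)) = GB n * q :=
  exists_eq_mul_right_of_dvd <|
    dvd_trans (Finset.gcd_dvd (onesPartition_mem_binParts n))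
      (Finset.prod_dvd_prod_of_dvd _ _ fun _ _ => pow_dvd_pow _ (Nat.sub_le _ _))

/-- `den_B(n,x) = (∏_{k ≥ 0, 2^k ≤ n} (1+x^{2^k})^⌊n/2^k⌋) / G_B(n,x)`. -/
noncomputable def denB (n : ℕ) : Polynomial ℤ :=
  (GB_dvd_prod n).choose

/-- Multisets of powers of two with sum `n`. -/
noncomputable def binMS (n : ℕ) : Finset (Multiset ℕ) :=
  (binParts n).image (fun μ => μ.parts)

theorem mem_binMS {n : ℕ} {M : Multiset ℕ} :
    M ∈ binMS n ↔ M.sum = n ∧ ∀ i ∈ M, ∃ k : ℕ, i = 2 ^ k := by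
  simp only [binMS, Finset.mem_image, binParts, Finset.mem_filter, Finset.mem_univ, true_and]
  constructor
  · rintro ⟨μ, h, rfl⟩
    exact ⟨μ.parts_sum, h⟩
  · rintro ⟨h1, h2⟩
    refine ⟨⟨M, ?_, h1⟩, h2, rfl⟩
    intro i hi
    obtain ⟨k, rfl⟩ := h2 i hi
    positivity

theorem sum_binParts {K : Type*} [AddCommMonoid K] (n : ℕ) (f : Multiset ℕ → K) :
    ∑ μ ∈ binParts n, f μ.parts = ∑ M ∈ binMS n, f M := by
  rw [binMS, Finset.sum_image]
  intro a _ b _ h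
  exact Nat.Partition.ext h

/-- The product of the reciprocals `1/(1+z^i)` over `i` in a multiset. -/
noncomputable def wt {K : Type*} [Field K] (z : K) (M : Multiset ℕ) : K :=
  (M.map (fun i => (1 + z ^ i)⁻¹)).prod

/-- The generating sum over binary partitions. -/
noncomputable def AA {K : Type*} [Field K] (r : ℕ) (z : K) : K := ∑ M ∈ binMS r, wt z M

theorem binMS_zero : binMS 0 = {0} := by
  ext M
  rw [mem_binMS, Finset.mem_singleton]
  constructor
  · rintro ⟨h1, h2⟩
    refine Multiset.eq_zero_of_forall_notMem fun i hi => ?_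
    obtain ⟨k, rfl⟩ := h2 i hi
    have := Multiset.le_sum_of_mem hi
    have : 0 < 2 ^ k := by positivity
    omega
  · rintro rfl
    simp

theorem AA_zero {K : Type*} [Field K] (z : K) : AA 0 z = 1 := by
  simp [AA, binMS_zero, wt]

theorem sum_with_one {K : Type*} [Field K] (r : ℕ) (z : K) :
    ∑ M ∈ (binMS (r + 1)).filter (fun M => 1 ∈ M), wt z M = (1 + z)⁻¹ * AA r z := by
  rw [AA, Finset.mul_sum]
  symm
  refine Finset.sum_bij (fun M _ => 1 ::ₘ M) ?_ ?_ ?_ ?_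
  · intro M hM
    rw [mem_binMS] at hM
    rw [Finset.mem_filter, mem_binMS]
    refine ⟨⟨by rw [Multiset.sum_cons]; omega, ?_⟩, by simp⟩
    intro i hi
    rcases Multiset.mem_cons.1 hi with rfl | hi
    · exact ⟨0, rfl⟩
    · exact hM.2 i hi
  · intro a _ b _ h
    simpa using h
  · intro M hM
    rw [Finset.mem_filter, mem_binMS] at hM
    obtain ⟨N, rfl⟩ := Multiset.exists_cons_of_mem hM.2
    refine ⟨N, ?_, rfl⟩
    rw [mem_binMS]
    refine ⟨?_, fun i hi => hM.1.2 i (Multiset.mem_cons_of_mem hi)⟩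
    have := hM.1.1
    rw [Multiset.sum_cons] at this
    omega
  · intro M _
    simp [wt]

theorem even_of_no_one {M : Multiset ℕ} (h : ∀ i ∈ M, ∃ k : ℕ, i = 2 ^ k) (h1 : 1 ∉ M) :
    ∀ i ∈ M, ∃ k : ℕ, i = 2 * 2 ^ k := by
  intro i hi
  obtain ⟨k, rfl⟩ := h i hi
  cases k with
  | zero => exact absurd hi (by simpa using h1)
  | succ k => exact ⟨k, by ring⟩

theorem sum_without_one {K : Type*} [Field K] (m : ℕ) (z : K) :
    ∑ M ∈ (binMS (2 * m)).filter (fun M => ¬ 1 ∈ M), wt z M = AA m (z ^ 2) := by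
  rw [AA]
  symm
  refine Finset.sum_bij (fun M _ => M.map (fun i => 2 * i)) ?_ ?_ ?_ ?_
  · intro M hM
    rw [mem_binMS] at hM
    rw [Finset.mem_filter, mem_binMS]
    refine ⟨⟨by rw [Multiset.sum_map_mul_left, Multiset.map_id', hM.1], ?_⟩, ?_⟩
    · intro i hi
      obtain ⟨j, hj, rfl⟩ := Multiset.mem_map.1 hi
      obtain ⟨k, rfl⟩ := hM.2 j hj
      exact ⟨k + 1, by ring⟩
    · intro hi
      obtain ⟨j, hj, h⟩ := Multiset.mem_map.1 hi
      omega
  · intro a _ b _ h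
    exact Multiset.map_injective (fun x y h => by simpa using h) h
  · intro M hM
    rw [Finset.mem_filter, mem_binMS] at hM
    obtain ⟨⟨hs, h2⟩, h1⟩ := hM
    have h3 := even_of_no_one h2 h1
    have hmap : (M.map (fun i => i / 2)).map (fun i => 2 * i) = M := by
      rw [Multiset.map_map]
      conv_rhs => rw [← Multiset.map_id M]
      refine Multiset.map_congr rfl fun i hi => ?_
      obtain ⟨k, rfl⟩ := h3 i hi
      simp
    refine ⟨M.map (fun i => i / 2), ?_, hmap⟩
    rw [mem_binMS]
    constructor
    · rw [← hmap, Multiset.sum_map_mul_left, Multiset.map_id'] at hs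
      omega
    · intro i hi
      obtain ⟨j, hj, rfl⟩ := Multiset.mem_map.1 hi
      obtain ⟨k, rfl⟩ := h3 j hj
      exact ⟨k, by simp⟩
  · intro M _
    simp [wt, Multiset.map_map, Function.comp_def, pow_mul]

theorem AA_even {K : Type*} [Field K] (m : ℕ) (z : K) :
    AA (2 * m + 2) z = (1 + z)⁻¹ * AA (2 * m + 1) z + AA (m + 1) (z ^ 2) := by
  rw [← sum_with_one, ← sum_without_one, AA]
  rw [show 2 * (m + 1) = 2 * m + 1 + 1 by ring]
  rw [Finset.sum_filter_add_sum_filter_not]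

theorem AA_odd {K : Type*} [Field K] (m : ℕ) (z : K) :
    AA (2 * m + 1) z = (1 + z)⁻¹ * AA (2 * m) z := by
  rw [← sum_with_one, AA, Finset.filter_true_of_mem]
  intro M hM
  rw [mem_binMS] at hM
  by_contra h1
  have h3 := even_of_no_one hM.2 h1
  have : 2 ∣ M.sum := Multiset.dvd_sum fun i hi => by
    obtain ⟨k, rfl⟩ := h3 i hi
    exact Dvd.intro _ rfl
  omega

/-- Normalised version of `AA`. -/
noncomputable def BB {K : Type*} [Field K] (r : ℕ) (z : K) : K := (1 + z) ^ r * AA r z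

theorem BB_odd {K : Type*} [Field K] (m : ℕ) (z : K) (hz : 1 + z ≠ 0) :
    BB (2 * m + 1) z = BB (2 * m) z := by
  rw [BB, BB, AA_odd]
  field_simp
  ring

theorem BB_even {K : Type*} [Field K] (m : ℕ) (z : K) (hz : 1 + z ≠ 0) (hz2 : 1 + z ^ 2 ≠ 0) :
    BB (2 * m + 2) z = BB (2 * m) z + ((1 + z) ^ 2 / (1 + z ^ 2)) ^ (m + 1) * BB (m + 1) (z ^ 2) := by
  rw [← BB_odd m z hz, BB, BB, BB, AA_even, div_pow, ← pow_mul]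
  field_simp
  ring

section Norm
variable {K : Type*} [NormedField K] [IsUltrametricDist K]

theorem norm_add_left {x y : K} (h : ‖y‖ < ‖x‖) : ‖x + y‖ = ‖x‖ := by
  rw [IsUltrametricDist.norm_add_eq_max_of_norm_ne_norm h.ne', max_eq_left h.le]

theorem norm_root (s : ℕ) (z : K) (hz : z ^ (2 ^ s) = -1) : ‖z‖ = 1 := by
  have h : ‖z‖ ^ (2 ^ s) = 1 := by rw [← norm_pow, hz]; simp
  exact (pow_eq_one_iff_of_nonneg (norm_nonneg _) (by positivity)).1 h

theorem lt_one_of_pow {a : ℝ} {n : ℕ} (ha : 0 ≤ a) (h : a ^ n = 1 / 2) : a < 1 := by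
  by_contra h1
  have := one_le_pow₀ (not_lt.1 h1) (n := n)
  linarith

theorem norm_pi (h2 : ‖(2 : K)‖ = 1 / 2) (s : ℕ) (z : K) (hz : z ^ (2 ^ (s + 1)) = -1) :
    ‖1 + z‖ ^ (2 ^ (s + 1)) = 1 / 2 := by
  induction s generalizing z with
  | zero =>
    have hz' : z ^ 2 = -1 := by simpa using hz
    have h1 := norm_root _ z hz
    rw [← norm_pow]
    have : (1 + z) ^ (2 ^ (0 + 1)) = 2 * z := by
      simp only [zero_add, pow_one]
      linear_combination hz'
    rw [this, norm_mul, h2, h1, mul_one]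
  | succ s ih =>
    have h1 := norm_root _ z hz
    have hw : (z ^ 2) ^ (2 ^ (s + 1)) = -1 := by
      rw [← pow_mul, ← hz]; congr 1; ring
    have := ih _ hw
    have hlt : ‖2 * z‖ < ‖1 + z ^ 2‖ := by
      rw [norm_mul, h2, h1, mul_one]
      have hl := lt_one_of_pow (norm_nonneg _) this
      have hpos : 0 < ‖1 + z ^ 2‖ := by
        rcases (norm_nonneg (1 + z ^ 2)).eq_or_lt with h | h
        · rw [← h, zero_pow (by positivity)] at this
          norm_num at this
        · exact h
      rw [← this]
      exact pow_lt_self_of_lt_one₀ hpos hl (Nat.one_lt_two_pow (by omega))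
    have h3 : ‖1 + z‖ ^ 2 = ‖1 + z ^ 2‖ := by
      rw [← norm_pow, ← norm_add_left hlt]
      congr 1
      ring
    rw [show 2 ^ (s + 1 + 1) = 2 * 2 ^ (s + 1) by ring, pow_mul, h3, this]

theorem pi_ne (h2 : ‖(2 : K)‖ = 1 / 2) (s : ℕ) (z : K) (hz : z ^ (2 ^ (s + 1)) = -1) :
    1 + z ≠ 0 := by
  intro h
  have := norm_pi h2 s z hz
  rw [h, norm_zero, zero_pow (by positivity)] at this
  norm_num at this

theorem pi_sq (h2 : ‖(2 : K)‖ = 1 / 2) (s : ℕ) (z : K) (hz : z ^ (2 ^ (s + 2)) = -1) :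
    ‖1 + z ^ 2‖ = ‖1 + z‖ ^ 2 := by
  have hw : (z ^ 2) ^ (2 ^ (s + 1)) = -1 := by
    rw [← pow_mul, ← hz]; congr 1; ring
  have e1 := norm_pi h2 _ z hz
  have e2 := norm_pi h2 _ _ hw
  rw [show 2 ^ (s + 1 + 1) = 2 * 2 ^ (s + 1) by ring, pow_mul, ← e2] at e1
  exact ((pow_left_inj₀ (by positivity) (by positivity) (by positivity)).1 e1).symm

theorem BB_main (h2 : ‖(2 : K)‖ = 1 / 2) (m : ℕ) : 1 ≤ m → ∀ (s : ℕ) (z : K),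
    2 * m < 2 ^ s → z ^ (2 ^ s) = -1 →
    1 / 2 ≤ ‖BB (2 * m) z‖ * ‖1 + z‖ ^ 2 ∧ ‖BB (2 * m) z‖ < 1 ∧
      (m % 2 = 1 → ‖BB (2 * m) z‖ * ‖1 + z‖ ^ 2 = 1 / 2) := by
  induction m using Nat.strong_induction_on with
  | _ m ih =>
  intro hm s z hs hz
  obtain ⟨s, rfl⟩ : ∃ t, s = t + 2 := by
    refine ⟨s - 2, ?_⟩
    have : s ≠ 0 := by rintro rfl; omega
    have : s ≠ 1 := by rintro rfl; omega
    omega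
  have hw : (z ^ 2) ^ (2 ^ (s + 1)) = -1 := by
    rw [← pow_mul, ← hz]; congr 1; ring
  have hz1 := norm_root _ z hz
  have n1 := pi_ne h2 _ z hz
  have n2 := pi_ne h2 _ _ hw
  have hsq := pi_sq h2 s z hz
  have hpi := norm_pi h2 _ z hz
  have ha1 := lt_one_of_pow (norm_nonneg _) hpi
  have ha0 : 0 < ‖1 + z‖ := norm_pos_iff.2 n1
  have ha2 : 1 / 2 < ‖1 + z‖ ^ 2 := by
    rw [← hpi]
    refine pow_lt_pow_right_of_lt_one₀ ha0 ha1 ?_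
    calc 2 = 2 ^ 1 := rfl
      _ < 2 ^ (s + 1 + 1) := Nat.pow_lt_pow_right (by norm_num) (by omega)
  set a := ‖1 + z‖ with ha
  set u := (1 + z) ^ 2 / (1 + z ^ 2) with hu
  have hun : ‖u‖ = 1 := by
    rw [hu, norm_div, norm_pow, hsq]
    exact div_self (by positivity)
  have h1u : ‖1 + u‖ * a ^ 2 = 1 / 2 := by
    have : (1 + u) * (1 + z ^ 2) = 2 * (1 + z * (1 + z)) := by
      rw [hu]; field_simp; ring
    rw [← hsq, ← norm_mul, this, norm_mul, h2, norm_add_left]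
    · simp
    · rw [norm_mul, hz1, norm_one, one_mul]; exact ha1
  have ha2sq : a ^ 2 < 1 := by nlinarith
  have hapos : 0 < a ^ 2 := by positivity
  -- it suffices to treat the odd case by an equality
  have hodd : ‖BB (2 * m) z‖ * a ^ 2 = 1 / 2 →
      1 / 2 ≤ ‖BB (2 * m) z‖ * a ^ 2 ∧ ‖BB (2 * m) z‖ < 1 ∧
      (m % 2 = 1 → ‖BB (2 * m) z‖ * a ^ 2 = 1 / 2) := by
    intro h
    refine ⟨h.ge, ?_, fun _ => h⟩
    by_contra hc
    nlinarith
  have hpow : 2 ^ (s + 2) = 2 * 2 ^ (s + 1) := by ring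
  rcases Nat.even_or_odd' m with ⟨t, rfl | rfl⟩
  · -- even case
    have ht : 1 ≤ t := by omega
    have e1 : BB (2 * (2 * t)) z = u ^ (2 * t) * BB (2 * t) (z ^ 2) + BB (2 * (2 * t - 1)) z := by
      have := BB_even (2 * t - 1) z n1 n2
      rw [show 2 * (2 * t - 1) + 2 = 2 * (2 * t) by omega,
        show 2 * t - 1 + 1 = 2 * t by omega] at this
      rw [this, add_comm]
    obtain ⟨p1, p2, -⟩ := ih t (by omega) ht (s + 1) (z ^ 2) (by omega) hw
    obtain ⟨-, -, q⟩ := ih (2 * t - 1) (by omega) (by omega) (s + 2) z (by omega) hz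
    have q := q (by omega)
    rw [hsq] at p1
    have hn : ‖u ^ (2 * t) * BB (2 * t) (z ^ 2)‖ = ‖BB (2 * t) (z ^ 2)‖ := by
      rw [norm_mul, norm_pow, hun, one_pow, one_mul]
    have p3 : 1 / 2 < ‖BB (2 * t) (z ^ 2)‖ * a ^ 2 := by
      by_contra hc
      nlinarith
    have hlt : ‖BB (2 * (2 * t - 1)) z‖ < ‖u ^ (2 * t) * BB (2 * t) (z ^ 2)‖ := by
      rw [hn]
      refine lt_of_mul_lt_mul_right ?_ hapos.le
      rw [q]
      exact p3
    rw [e1, norm_add_left hlt, hn]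
    exact ⟨p3.le, p2, fun h => by omega⟩
  · apply hodd
    rcases Nat.eq_zero_or_pos t with rfl | ht
    · have e1 := BB_even 0 z n1 n2
      have e2 := BB_odd 0 (z ^ 2) n2
      have e3 : ∀ y : K, BB 0 y = 1 := fun y => by simp [BB, AA_zero]
      simp only [mul_zero, zero_add, e3, pow_one] at e1 e2
      rw [e2, mul_one] at e1
      simp only [mul_zero, zero_add, mul_one]
      rw [e1]
      exact h1u
    · have e1 := BB_even (2 * t) z n1 n2
      have e2 := BB_even (2 * t - 1) z n1 n2
      rw [show 2 * (2 * t - 1) + 2 = 2 * (2 * t) by omega,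
        show 2 * t - 1 + 1 = 2 * t by omega] at e2
      rw [e2, BB_odd t _ n2] at e1
      have e3 : BB (2 * (2 * t + 1)) z
          = BB (2 * (2 * t - 1)) z + u ^ (2 * t) * (1 + u) * BB (2 * t) (z ^ 2) := by
        rw [show 2 * (2 * t + 1) = 2 * (2 * t) + 2 by ring, e1]
        ring
      obtain ⟨p1, p2, -⟩ := ih t (by omega) ht (s + 1) (z ^ 2) (by omega) hw
      obtain ⟨-, -, q⟩ := ih (2 * t - 1) (by omega) (by omega) (s + 2) z (by omega) hz
      have q := q (by omega)
      rw [e3, norm_add_left, q]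
      rw [norm_mul, norm_mul, norm_pow, hun, one_pow, one_mul]
      refine lt_of_mul_lt_mul_right ?_ hapos.le
      rw [q, mul_right_comm, h1u]
      linarith

theorem AA_ne_zero (h2 : ‖(2 : K)‖ = 1 / 2) (r s : ℕ) (z : K) (hr : r < 2 ^ s)
    (hz : z ^ (2 ^ s) = -1) : AA r z ≠ 0 := by
  rcases Nat.eq_zero_or_pos r with rfl | hr0
  · rw [AA_zero]; exact one_ne_zero
  obtain ⟨s, rfl⟩ : ∃ t, s = t + 1 := by
    refine ⟨s - 1, ?_⟩
    have : s ≠ 0 := by rintro rfl; omega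
    omega
  have n1 := pi_ne h2 _ z hz
  suffices h : BB r z ≠ 0 from fun h0 => h (by rw [BB, h0, mul_zero])
  have key : ∀ m : ℕ, 2 * m < 2 ^ (s + 1) → BB (2 * m) z ≠ 0 := by
    intro m hm h0
    rcases Nat.eq_zero_or_pos m with rfl | hm0
    · simp [BB, AA_zero] at h0
    · have := (BB_main h2 m hm0 _ z hm hz).1
      rw [h0] at this
      norm_num at this
  rcases Nat.even_or_odd' r with ⟨t, rfl | rfl⟩
  · exact key t hr
  · rw [BB_odd t z n1]
    exact key t (by omega)

theorem one_add_ne_zero (h2 : ‖(2 : K)‖ = 1 / 2) (k s : ℕ) (hk : k ≠ s) (z : K)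
    (hz : z ^ (2 ^ s) = -1) : 1 + z ^ (2 ^ k) ≠ 0 := by
  rcases lt_or_gt_of_ne hk with h | h
  · obtain ⟨d, rfl⟩ := Nat.exists_eq_add_of_lt h
    refine pi_ne h2 d _ ?_
    rw [← pow_mul, ← pow_add, ← hz]
    rfl
  · obtain ⟨d, rfl⟩ := Nat.exists_eq_add_of_lt h
    rw [show 2 ^ (s + d + 1) = 2 ^ s * (2 * 2 ^ d) by ring, pow_mul, hz, pow_mul]
    norm_num
    intro h
    have : (2 : K) = 0 := by linear_combination h
    rw [this, norm_zero] at h2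
    norm_num at h2

end Norm

theorem wt_eq {K : Type*} [Field K] (z : K) (T : Finset ℕ) (M : Multiset ℕ)
    (hT : ∀ i ∈ M, ∃ k ∈ T, i = 2 ^ k) :
    wt z M = ∏ k ∈ T, ((1 + z ^ (2 ^ k))⁻¹) ^ (M.count (2 ^ k)) := by
  rw [wt, Finset.prod_multiset_map_count]
  rw [← Finset.prod_image (s := T) (g := fun k => 2 ^ k)
    (f := fun i => ((1 + z ^ i)⁻¹) ^ (M.count i))
    (fun a _ b _ h => Nat.pow_right_injective (le_refl 2) h)]
  refine Finset.prod_subset ?_ ?_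
  · intro i hi
    obtain ⟨k, hk, rfl⟩ := hT i (by simpa using hi)
    exact Finset.mem_image_of_mem _ hk
  · intro i _ hi
    have : M.count i = 0 := Multiset.count_eq_zero.2 (by simpa using hi)
    rw [this, pow_zero]

/-- `hB` evaluated at `z`, as a function of the multiset of parts. -/
noncomputable def hz {K : Type*} [Field K] (z : K) (n : ℕ) (M : Multiset ℕ) : K :=
  ∏ k ∈ (Finset.range (n + 1)).filter (fun k => 2 ^ k ≤ n),
    (1 + z ^ (2 ^ k)) ^ (n / 2 ^ k - M.count (2 ^ k))

theorem aeval_hB {K : Type*} [Field K] (z : K) (n : ℕ) (μ : Nat.Partition n) :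
    aeval z (hB n μ) = hz z n μ.parts := by
  simp [hB, hz, map_prod]

theorem count_le {n k : ℕ} {M : Multiset ℕ} (h : M.sum = n) : M.count (2 ^ k) ≤ n / 2 ^ k := by
  rw [Nat.le_div_iff_mul_le (by positivity)]
  have h1 : Multiset.replicate (M.count (2 ^ k)) (2 ^ k) ≤ M := Multiset.le_count_iff_replicate_le.1 le_rfl
  obtain ⟨N, hN⟩ := Multiset.le_iff_exists_add.1 h1
  have h2 : M.sum = M.count (2 ^ k) * 2 ^ k + N.sum := by
    conv_lhs => rw [hN]
    simp
  omega

theorem hz_sum {K : Type*} [Field K] (z : K) (n s : ℕ) (hs : 2 ^ s ≤ n) (h0 : 1 + z ^ (2 ^ s) = 0)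
    (h1 : ∀ k, k ≠ s → 1 + z ^ (2 ^ k) ≠ 0) :
    ∑ M ∈ binMS n, hz z n M =
      (∏ k ∈ ((Finset.range (n + 1)).filter (fun k => 2 ^ k ≤ n)).erase s,
        (1 + z ^ (2 ^ k)) ^ (n / 2 ^ k)) * AA (n % 2 ^ s) z := by
  have hsmem : s ∈ (Finset.range (n + 1)).filter (fun k => 2 ^ k ≤ n) := by
    rw [Finset.mem_filter, Finset.mem_range]
    have := Nat.lt_two_pow_self (n := s)
    exact ⟨by omega, hs⟩
  set T := (Finset.range (n + 1)).filter (fun k => 2 ^ k ≤ n) with hT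
  have hr : n % 2 ^ s < 2 ^ s := Nat.mod_lt _ (by positivity)
  have hdm := Nat.mod_add_div n (2 ^ s)
  -- the terms that vanish
  have e1 : ∑ M ∈ binMS n, hz z n M =
      ∑ M ∈ (binMS n).filter (fun M => M.count (2 ^ s) = n / 2 ^ s), hz z n M := by
    symm
    refine Finset.sum_filter_of_ne ?_
    intro M hM hne
    by_contra hc
    apply hne
    rw [mem_binMS] at hM
    have := count_le (k := s) hM.1
    refine Finset.prod_eq_zero hsmem ?_
    rw [h0, zero_pow (by omega)]
  rw [e1, AA, Finset.mul_sum]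
  symm
  refine Finset.sum_bij (fun M _ => M + Multiset.replicate (n / 2 ^ s) (2 ^ s)) ?_ ?_ ?_ ?_
  · intro M hM
    rw [mem_binMS] at hM
    have hc : M.count (2 ^ s) = 0 := by
      have := count_le (k := s) hM.1
      rw [Nat.div_eq_of_lt hr] at this
      omega
    rw [Finset.mem_filter, mem_binMS]
    refine ⟨⟨?_, ?_⟩, ?_⟩
    · rw [Multiset.sum_add, hM.1, Multiset.sum_replicate, smul_eq_mul, mul_comm]
      exact hdm
    · intro i hi
      rcases Multiset.mem_add.1 hi with hi | hi
      · exact hM.2 i hi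
      · exact ⟨s, Multiset.eq_of_mem_replicate hi⟩
    · rw [Multiset.count_add, hc, Multiset.count_replicate_self, zero_add]
  · intro a _ b _ h
    simpa using h
  · intro M hM
    rw [Finset.mem_filter, mem_binMS] at hM
    obtain ⟨⟨hM1, hM2⟩, hM3⟩ := hM
    have hle : Multiset.replicate (n / 2 ^ s) (2 ^ s) ≤ M :=
      Multiset.le_count_iff_replicate_le.1 hM3.ge
    obtain ⟨N, rfl⟩ := Multiset.le_iff_exists_add.1 hle
    refine ⟨N, ?_, add_comm _ _⟩
    rw [mem_binMS]
    refine ⟨?_, fun i hi => hM2 i (Multiset.mem_add.2 (Or.inr hi))⟩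
    rw [Multiset.sum_add, Multiset.sum_replicate, smul_eq_mul, mul_comm] at hM1
    omega
  · intro M hM
    rw [mem_binMS] at hM
    have hc : M.count (2 ^ s) = 0 := by
      have := count_le (k := s) hM.1
      rw [Nat.div_eq_of_lt hr] at this
      omega
    rw [wt_eq z (T.erase s) M, hz, ← hT, ← Finset.mul_prod_erase _ _ hsmem,
      ← Finset.prod_mul_distrib]
    · rw [Multiset.count_add, hc, Multiset.count_replicate_self, zero_add, Nat.sub_self, pow_zero,
        one_mul]
      refine Finset.prod_congr rfl fun k hk => ?_
      have hks := Finset.ne_of_mem_erase hk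
      have hne : (2 : ℕ) ^ s ≠ 2 ^ k := fun h =>
        hks (Nat.pow_right_injective (le_refl 2) h).symm
      have hle : M.count (2 ^ k) ≤ n / 2 ^ k :=
        (count_le (k := k) hM.1).trans (Nat.div_le_div_right (Nat.mod_le _ _))
      rw [Multiset.count_add, Multiset.count_replicate, if_neg hne, add_zero,
        pow_sub₀ _ (h1 k hks) hle, inv_pow]
    · intro i hi
      obtain ⟨k, rfl⟩ := hM.2 i hi
      have hle := Multiset.le_sum_of_mem hi
      rw [hM.1] at hle
      have hmod := Nat.mod_le n (2 ^ s)
      refine ⟨k, ?_, rfl⟩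
      rw [Finset.mem_erase, hT, Finset.mem_filter, Finset.mem_range]
      have := Nat.lt_two_pow_self (n := k)
      refine ⟨?_, by omega, by omega⟩
      rintro rfl
      omega

theorem not_dvd_sum {K : Type*} [NormedField K] [IsUltrametricDist K]
    (h2 : ‖(2 : K)‖ = 1 / 2) (n s : ℕ) (hs : 2 ^ s ≤ n) (z : K) (hzz : z ^ (2 ^ s) = -1) :
    ¬ ((1 + X ^ (2 ^ s) : Polynomial ℤ) ∣ ∑ μ ∈ binParts n, hB n μ) := by
  intro hsum
  have h0 : 1 + z ^ (2 ^ s) = 0 := by rw [hzz]; ring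
  have h1 : ∀ k, k ≠ s → 1 + z ^ (2 ^ k) ≠ 0 := fun k hk => one_add_ne_zero h2 k s hk z hzz
  obtain ⟨q, hq⟩ := hsum
  have he := congrArg (aeval z) hq
  rw [map_sum, map_mul] at he
  simp only [aeval_hB] at he
  rw [sum_binParts n (hz z n), hz_sum z n s hs h0 h1] at he
  have hr0 : aeval z (1 + X ^ (2 ^ s) : Polynomial ℤ) = 0 := by simp [h0]
  rw [hr0, zero_mul] at he
  rcases mul_eq_zero.1 he with h | h
  · rw [Finset.prod_eq_zero_iff] at h
    obtain ⟨k, hk, h⟩ := h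
    exact h1 k (Finset.ne_of_mem_erase hk) (by by_contra hc; exact pow_ne_zero _ hc h)
  · exact AA_ne_zero h2 _ s z (Nat.mod_lt _ (by positivity)) hzz h

/-- For every `n ≥ 2` and every `s ≥ 0` with `2^s ≤ n`, the polynomial `1 + x^{2^s}`
does not divide `num_B(n,x)` in `ℤ[x]`. -/
theorem one_add_X_pow_not_dvd_numB (n s : ℕ) (hn : 2 ≤ n) (hs : 2 ^ s ≤ n) :
    ¬ ((1 + X ^ (2 ^ s) : Polynomial ℤ) ∣ numB n) := by
  intro hdvd
  have hsum : (1 + X ^ (2 ^ s) : Polynomial ℤ) ∣ ∑ μ ∈ binParts n, hB n μ := by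
    rw [(GB_dvd_sum n).choose_spec]
    exact Dvd.dvd.mul_left hdvd _
  have : Fact (Nat.Prime 2) := ⟨Nat.prime_two⟩
  have h2 : ‖(2 : PadicAlgCl 2)‖ = 1 / 2 := by
    have h := PadicAlgCl.norm_extends 2 ((2 : ℕ) : ℚ_[2])
    rw [Padic.norm_p, map_natCast] at h
    rw [one_div]
    exact_mod_cast h
  obtain ⟨z, hzz⟩ := IsAlgClosed.exists_pow_nat_eq (-1 : PadicAlgCl 2) (n := 2 ^ s) (by positivity)
  exact not_dvd_sum h2 n s hs z hzz hsum
end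

section
/- For every integer n ≥ 1, the evaluation of the odd-partition numerator at x = −1 satisfies num_O(n,−1) = o(n!), where o(M) denotes the largest odd divisor of the positive integer M. -/
open Polynomial Finset
open scoped Classical

/-- The odd partitions of `n`: partitions of `n` all of whose parts are odd. -/
noncomputable def oddParts (n : ℕ) : Finset (Nat.Partition n) :=
  Finset.univ.filter (fun μ => ∀ i ∈ μ.parts, Odd i)

/-- `h_{O,λ}(x) = ∏_{i odd, 1 ≤ i ≤ n} (1+x^i)^(⌊n/i⌋ - m_λ(i))` in `ℤ[x]`. -/
noncomputable def hO (n : ℕ) (μ : Nat.Partition n) : Polynomial ℤ :=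
  ∏ i ∈ (Finset.Icc 1 n).filter (fun i => Odd i),
    (1 + X ^ i) ^ (n / i - μ.parts.count i)

/-- `G_O(n,x)`: the (normalized) gcd of the `h_{O,λ}(x)` over odd partitions `λ` of `n`. -/
noncomputable def GO (n : ℕ) : Polynomial ℤ :=
  (oddParts n).gcd (hO n)

theorem GO_dvd_sum (n : ℕ) :
    ∃ q : Polynomial ℤ, (∑ μ ∈ oddParts n, hO n μ) = GO n * q :=
  exists_eq_mul_right_of_dvd (Finset.dvd_sum fun _ hμ => Finset.gcd_dvd hμ)

/-- `num_O(n,x) = (∑_{λ odd partition of n} h_{O,λ}(x)) / G_O(n,x)`. -/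
noncomputable def numO (n : ℕ) : Polynomial ℤ :=
  (GO_dvd_sum n).choose

theorem one_add_pow_eq (m : ℕ) (hm : Odd m) :
    (1 + X ^ m : ℤ[X]) = ∏ d ∈ m.divisors, cyclotomic (2 * d) ℤ := by
  have h0 : 0 < m := hm.pos
  have hd : (2 * m).divisors = m.divisors ∪ m.divisors.image (2 * ·) := by
    ext d
    simp only [Nat.mem_divisors, mem_union, mem_image]
    constructor
    · rintro ⟨h, h'⟩
      rcases Nat.even_or_odd' d with ⟨k, rfl | rfl⟩
      · right; exact ⟨k, ⟨Nat.dvd_of_mul_dvd_mul_left (by norm_num) h, h0.ne'⟩, rfl⟩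
      · left
        refine ⟨Nat.Coprime.dvd_of_dvd_mul_left ?_ h, h0.ne'⟩
        simp
    · rintro (⟨h, -⟩ | ⟨k, ⟨h, -⟩, rfl⟩)
      · exact ⟨h.mul_left 2, by omega⟩
      · exact ⟨Nat.mul_dvd_mul_left 2 h, by omega⟩
  have hdisj : Disjoint m.divisors (m.divisors.image (2 * ·)) := by
    rw [Finset.disjoint_left]
    intro a ha hb
    obtain ⟨k, -, rfl⟩ := mem_image.1 hb
    have := hm.of_dvd_nat (Nat.dvd_of_mem_divisors ha)
    exact (Nat.not_even_iff_odd.2 this) (even_two_mul k)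
  have h1 := prod_cyclotomic_eq_X_pow_sub_one (n := 2 * m) (by omega) ℤ
  rw [hd, prod_union hdisj, prod_cyclotomic_eq_X_pow_sub_one h0,
    prod_image (by intro a _ b _ h; simpa using h)] at h1
  have hne : (X ^ m - 1 : ℤ[X]) ≠ 0 := by
    simpa using X_pow_sub_C_ne_zero h0 (1 : ℤ)
  apply mul_left_cancel₀ hne
  rw [h1]; ring

noncomputable def ff (d : ℕ) : ℤ := if d = 1 then 1 else eval (-1) (cyclotomic (2 * d) ℤ)

theorem prod_ff (m : ℕ) (hm : Odd m) : ∏ d ∈ m.divisors, ff d = m := by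
  have h1 : (1 + X ^ m : ℤ[X]) = (1 + X) * ∑ i ∈ range m, (-X) ^ i := by
    have := mul_neg_geom_sum (-X : ℤ[X]) m
    rw [hm.neg_pow] at this
    simpa using this.symm
  have h2 := one_add_pow_eq m hm
  have hmem : 1 ∈ m.divisors := by simp [hm.pos.ne']
  rw [h1, ← mul_prod_erase _ _ hmem] at h2
  have h3 : (1 + X : ℤ[X]) ≠ 0 := by
    intro h; have := congrArg (eval 0) h; simp at this
  rw [show cyclotomic (2 * 1) ℤ = 1 + X by simp [add_comm]] at h2
  have h4 := congrArg (eval (-1)) (mul_left_cancel₀ h3 h2)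
  rw [← mul_prod_erase _ _ hmem]
  simp only [eval_finsetSum, eval_pow, eval_neg, eval_X, neg_neg, one_pow, eval_prod] at h4
  simp only [sum_const, card_range, nsmul_eq_mul, mul_one] at h4
  rw [h4]
  simp only [ff, if_true, one_mul]
  apply prod_congr rfl
  intro d hd
  rw [if_neg (ne_of_mem_erase hd)]

abbrev SS (n : ℕ) : Finset ℕ := (Finset.Icc 1 n).filter (fun i => Odd i)

theorem prod_ff_fact (n : ℕ) :
    ∏ d ∈ SS n, ff d ^ (n / d) = (ordCompl[2] (Nat.factorial n) : ℤ) := by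
  have h1 : ∀ k : ℕ, (∏ j ∈ Ioc 0 k, (ordCompl[2] j)) = ordCompl[2] (Nat.factorial k) := by
    intro k
    induction k with
    | zero => simp
    | succ k ih =>
      rw [Finset.prod_Ioc_succ_top (Nat.zero_le _), ih, Nat.factorial_succ, Nat.ordCompl_mul,
        mul_comm]
  have h2 : ∀ j ∈ Ioc 0 n, ∏ d ∈ (SS n).filter (· ∣ j), ff d = ((ordCompl[2] j : ℕ) : ℤ) := by
    intro j hj
    simp only [mem_Ioc] at hj
    have ho : Odd (ordCompl[2] j) := by
      rw [← Nat.not_even_iff_odd, even_iff_two_dvd]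
      exact Nat.not_dvd_ordCompl Nat.prime_two (by omega)
    rw [← prod_ff _ ho]
    apply prod_congr _ (fun _ _ => rfl)
    ext d
    simp only [mem_filter, mem_Icc, Nat.mem_divisors]
    constructor
    · rintro ⟨⟨⟨_, _⟩, h⟩, h'⟩
      refine ⟨Nat.dvd_ordCompl_of_dvd_not_dvd h' ?_, ho.pos.ne'⟩
      rw [← even_iff_two_dvd, Nat.not_even_iff_odd]; exact h
    · rintro ⟨h, _⟩
      have hdj : d ∣ j := h.trans (Nat.ordCompl_dvd j 2)
      have := Nat.le_of_dvd (by omega) hdj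
      have := Nat.pos_of_dvd_of_pos hdj (by omega)
      exact ⟨⟨⟨by omega, by omega⟩, ho.of_dvd_nat h⟩, hdj⟩
  have h1n := congrArg (Nat.cast : ℕ → ℤ) (h1 n)
  rw [Nat.cast_prod] at h1n
  rw [← prod_congr rfl h2] at h1n
  refine Eq.trans ?_ (h1n.trans (by push_cast; rfl))
  rw [Finset.prod_comm' (t' := SS n) (s' := fun d => (Ioc 0 n).filter (d ∣ ·))]
  · apply prod_congr rfl
    intro d _
    rw [prod_const, Nat.Ioc_filter_dvd_card_eq_div]
  · intro x y; simp only [mem_filter]; tauto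

theorem hO_parts_mem {n : ℕ} {μ : Nat.Partition n} (hμ : μ ∈ oddParts n) :
    ∀ i ∈ μ.parts, i ∈ SS n := by
  intro i hi
  have h := (mem_filter.1 hμ).2 i hi
  have hle : i ≤ n := by
    have := Multiset.le_sum_of_mem hi
    rwa [μ.parts_sum] at this
  simp only [mem_filter, mem_Icc]
  exact ⟨⟨h.pos, hle⟩, h⟩

/-- number of parts divisible by `d` -/
noncomputable def cc {n : ℕ} (μ : Nat.Partition n) (d : ℕ) : ℕ :=
  Multiset.card (μ.parts.filter (d ∣ ·))

theorem cc_eq {n : ℕ} {μ : Nat.Partition n} (hμ : μ ∈ oddParts n) (d : ℕ) :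
    ∑ i ∈ (SS n).filter (d ∣ ·), μ.parts.count i = cc μ d := by
  rw [cc, ← Multiset.sum_count_eq_card (s := (SS n).filter (d ∣ ·))]
  · apply sum_congr rfl
    intro i hi
    rw [Multiset.count_filter_of_pos (mem_filter.1 hi).2]
  · intro a ha
    rw [Multiset.mem_filter] at ha
    exact mem_filter.2 ⟨hO_parts_mem hμ a ha.1, ha.2⟩

theorem cc_le {n : ℕ} (μ : Nat.Partition n) (d : ℕ) (hd : 0 < d) : cc μ d ≤ n / d := by
  rw [Nat.le_div_iff_mul_le hd, cc]
  have h1 : Multiset.card (μ.parts.filter (d ∣ ·)) • d ≤ (μ.parts.filter (d ∣ ·)).sum := by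
    apply Multiset.card_nsmul_le_sum
    intro x hx
    rw [Multiset.mem_filter] at hx
    exact Nat.le_of_dvd (μ.parts_pos hx.1) hx.2
  have h2 : (μ.parts.filter (d ∣ ·)).sum + (μ.parts.filter (fun x => ¬ d ∣ x)).sum = n := by
    rw [← Multiset.sum_add, Multiset.filter_add_not, μ.parts_sum]
  rw [smul_eq_mul] at h1
  omega

theorem count_le_div {n : ℕ} (μ : Nat.Partition n) (i : ℕ) (hi : 0 < i) :
    μ.parts.count i ≤ n / i := by
  refine le_trans ?_ (cc_le μ i hi)
  rw [cc, ← Multiset.count_filter_of_pos (p := (i ∣ ·)) (dvd_refl i)]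
  exact Multiset.count_le_card _ _

noncomputable def aa (n d : ℕ) : ℕ := (∑ i ∈ (SS n).filter (d ∣ ·), n / i) - n / d

noncomputable def KK {n : ℕ} (μ : Nat.Partition n) (d : ℕ) : ℕ := n / d - cc μ d

noncomputable def GG (n : ℕ) : ℤ[X] := ∏ d ∈ SS n, cyclotomic (2 * d) ℤ ^ aa n d

noncomputable def RR {n : ℕ} (μ : Nat.Partition n) : ℤ[X] :=
  ∏ d ∈ SS n, cyclotomic (2 * d) ℤ ^ KK μ d

theorem hO_eq {n : ℕ} {μ : Nat.Partition n} (hμ : μ ∈ oddParts n) :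
    hO n μ = GG n * RR μ := by
  have h1 : ∀ i ∈ SS n, (1 + X ^ i : ℤ[X]) ^ (n / i - μ.parts.count i) =
      ∏ d ∈ (SS n).filter (· ∣ i), cyclotomic (2 * d) ℤ ^ (n / i - μ.parts.count i) := by
    intro i hi
    simp only [mem_filter, mem_Icc] at hi
    rw [one_add_pow_eq i hi.2, prod_pow]
    congr 1
    apply prod_congr _ (fun _ _ => rfl)
    ext d
    simp only [mem_filter, mem_Icc, Nat.mem_divisors]
    constructor
    · rintro ⟨h, _⟩
      have := Nat.le_of_dvd (by omega) h
      have := Nat.pos_of_dvd_of_pos h (by omega)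
      exact ⟨⟨⟨by omega, by omega⟩, hi.2.of_dvd_nat h⟩, h⟩
    · rintro ⟨_, h⟩
      exact ⟨h, by omega⟩
  rw [hO, prod_congr rfl h1,
    Finset.prod_comm' (t' := SS n) (s' := fun d => (SS n).filter (d ∣ ·)),
    GG, RR, ← prod_mul_distrib]
  · apply prod_congr rfl
    intro d hd
    rw [prod_pow_eq_pow_sum, ← pow_add]
    congr 1
    have e1 : ∑ i ∈ (SS n).filter (d ∣ ·), (n / i - μ.parts.count i) + cc μ d
        = ∑ i ∈ (SS n).filter (d ∣ ·), n / i := by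
      rw [← cc_eq hμ, ← sum_add_distrib]
      apply sum_congr rfl
      intro i hi
      simp only [mem_filter, mem_Icc] at hi
      have := count_le_div μ i (by omega)
      omega
    have e2 : n / d ≤ ∑ i ∈ (SS n).filter (d ∣ ·), n / i :=
      Finset.single_le_sum (f := fun i => n / i) (fun _ _ => Nat.zero_le _)
        (mem_filter.2 ⟨hd, dvd_refl d⟩)
    simp only [mem_filter, mem_Icc] at hd
    have e3 := cc_le μ d (by omega)
    rw [aa, KK]
    omega
  · intro x y; simp only [mem_filter]; tauto

/-- the partition `d^{n/d} 1^{n % d}` -/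
def lam (n d : ℕ) (hd : 0 < d) : Nat.Partition n where
  parts := Multiset.replicate (n / d) d + Multiset.replicate (n % d) 1
  parts_pos := by
    intro i hi
    rw [Multiset.mem_add] at hi
    rcases hi with hi | hi <;> have := Multiset.eq_of_mem_replicate hi <;> omega
  parts_sum := by
    simp [Nat.div_add_mod']

theorem lam_mem (n d : ℕ) (hd : Odd d) : lam n d hd.pos ∈ oddParts n := by
  rw [oddParts, mem_filter]
  refine ⟨mem_univ _, ?_⟩
  intro i hi
  simp only [lam] at hi
  rw [Multiset.mem_add] at hi
  rcases hi with hi | hi <;> have := Multiset.eq_of_mem_replicate hi <;> subst this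
  · exact hd
  · exact odd_one

theorem KK_lam (n d : ℕ) (hd : 0 < d) : KK (lam n d hd) d = 0 := by
  rw [KK, cc]
  have : n / d ≤ Multiset.card ((lam n d hd).parts.filter (d ∣ ·)) := by
    have h : (Multiset.replicate (n / d) d) ≤ (lam n d hd).parts.filter (d ∣ ·) := by
      rw [Multiset.le_filter]
      refine ⟨Multiset.le_add_right _ _, ?_⟩
      intro a ha
      rw [Multiset.eq_of_mem_replicate ha]
    simpa using Multiset.card_le_card h
  omega

theorem GG_monic (n : ℕ) : (GG n).Monic :=
  monic_prod_of_monic _ _ fun _ _ => (cyclotomic.monic _ ℤ).pow _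

theorem RR_monic {n : ℕ} (μ : Nat.Partition n) : (RR μ).Monic :=
  monic_prod_of_monic _ _ fun _ _ => (cyclotomic.monic _ ℤ).pow _

theorem irr_dvd {n : ℕ} {μ : Nat.Partition n} {p : ℤ[X]} (hp : Irreducible p) (h : p ∣ RR μ) :
    ∃ d ∈ SS n, KK μ d ≠ 0 ∧ Associated p (cyclotomic (2 * d) ℤ) := by
  obtain ⟨d, hd, h1⟩ := (Prime.dvd_finsetProd_iff hp.prime _).1 h
  refine ⟨d, hd, ?_, ?_⟩
  · intro h0
    rw [h0, pow_zero] at h1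
    exact hp.not_isUnit (isUnit_of_dvd_one h1)
  · have h2 := hp.prime.dvd_of_dvd_pow h1
    simp only [mem_filter, mem_Icc] at hd
    exact hp.associated_of_dvd (cyclotomic.irreducible (by omega)) h2

theorem GO_eq (n : ℕ) : GO n = GG n := by
  have h1 : GG n ∣ GO n := Finset.dvd_gcd fun μ hμ => by
    rw [hO_eq hμ]; exact dvd_mul_right _ _
  obtain ⟨r, hr⟩ := h1
  have h2 : ∀ μ ∈ oddParts n, r ∣ RR μ := by
    intro μ hμ
    have h : GO n ∣ hO n μ := Finset.gcd_dvd hμ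
    rw [hr, hO_eq hμ] at h
    exact (mul_dvd_mul_iff_left (GG_monic n).ne_zero).1 h
  have hu : IsUnit r := by
    by_contra hu
    have h1m := lam_mem n 1 odd_one
    have hr0 : r ≠ 0 := by
      rintro rfl
      exact (RR_monic _).ne_zero (zero_dvd_iff.1 (h2 _ h1m))
    obtain ⟨p, hp, hpr⟩ := WfDvdMonoid.exists_irreducible_factor hu hr0
    obtain ⟨d, hd, -, ha⟩ := irr_dvd hp (hpr.trans (h2 _ h1m))
    have hd' := (mem_filter.1 hd).2
    obtain ⟨e, he, hk, hb⟩ := irr_dvd hp (hpr.trans (h2 _ (lam_mem n d hd')))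
    have h3 := eq_of_monic_of_associated (cyclotomic.monic _ ℤ) (cyclotomic.monic _ ℤ)
      (ha.symm.trans hb)
    have h4 : 2 * d = 2 * e := cyclotomic_injective h3
    have h5 : d = e := by omega
    subst h5
    exact hk (KK_lam n d _)
  have hassoc : Associated (GG n) (GO n) := ⟨hu.unit, by rw [hr]; rfl⟩
  have h3 : normalize (GO n) = GO n := Finset.normalize_gcd
  rw [← h3, ← (normalize_eq_normalize_iff_associated.2 hassoc)]
  exact (GG_monic n).normalize_eq_self

theorem numO_eq (n : ℕ) : numO n = ∑ μ ∈ oddParts n, RR μ := by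
  have h : (∑ μ ∈ oddParts n, hO n μ) = GO n * numO n := (GO_dvd_sum n).choose_spec
  have h' : (∑ μ ∈ oddParts n, hO n μ) = GG n * ∑ μ ∈ oddParts n, RR μ := by
    rw [mul_sum]
    exact sum_congr rfl (fun μ hμ => hO_eq hμ)
  rw [h', GO_eq] at h
  exact (mul_left_cancel₀ (GG_monic n).ne_zero h).symm

theorem eq_lam_one {n : ℕ} (μ : Nat.Partition n) (h : KK μ 1 = 0) :
    μ = lam n 1 one_pos := by
  have hc : n ≤ Multiset.card μ.parts := by
    simp [KK, cc] at h
    omega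
  have hone : ∀ x ∈ μ.parts, x = 1 := by
    intro x hx
    obtain ⟨t, ht⟩ := Multiset.exists_cons_of_mem hx
    have h1 : Multiset.card t • 1 ≤ t.sum := Multiset.card_nsmul_le_sum fun y hy =>
      μ.parts_pos (by rw [ht]; exact Multiset.mem_cons_of_mem hy)
    have h2 := μ.parts_sum
    have h3 := μ.parts_pos hx
    rw [ht, Multiset.card_cons] at hc
    rw [ht, Multiset.sum_cons] at h2
    simp only [smul_eq_mul] at h1
    omega
  have h4 := Multiset.eq_replicate_card.2 hone
  have h5 : Multiset.card μ.parts = n := by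
    have := μ.parts_sum
    rw [h4] at this
    simpa using this
  apply Nat.Partition.ext
  rw [h4, h5]
  simp [lam, Nat.mod_one]

theorem KK_lam_one {n d : ℕ} (hd : d ≠ 1) : KK (lam n 1 one_pos) d = n / d := by
  have : cc (lam n 1 one_pos) d = 0 := by
    rw [cc, Multiset.card_eq_zero, Multiset.filter_eq_nil]
    intro a ha
    simp only [lam] at ha
    rw [Multiset.mem_add] at ha
    have : a = 1 := by
      rcases ha with ha | ha <;> exact Multiset.eq_of_mem_replicate ha
    subst this
    simpa using hd
  rw [KK, this, Nat.sub_zero]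

/-- For every integer `n ≥ 1`, the evaluation of the odd-partition numerator at `x = −1`
satisfies `num_O(n,−1) = o(n!)`, where `o(M) = M / 2^{v₂(M)}` denotes the largest odd
divisor of the positive integer `M`. -/
theorem numO_eval_neg_one (n : ℕ) (hn : 1 ≤ n) :
    Polynomial.eval (-1 : ℤ) (numO n) = (ordCompl[2] (Nat.factorial n) : ℤ) := by
  rw [numO_eq, eval_finsetSum, Finset.sum_eq_single (lam n 1 one_pos)]
  · rw [← prod_ff_fact, RR, eval_prod]
    apply prod_congr rfl
    intro d _
    rw [eval_pow, ff]
    split_ifs with h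
    · subst h
      rw [KK_lam, pow_zero, one_pow]
    · rw [KK_lam_one h]
  · intro μ _ hne
    rw [RR, eval_prod]
    apply prod_eq_zero (i := 1)
    · simp [hn]
    · rw [eval_pow]
      have h0 : KK μ 1 ≠ 0 := fun h => hne (eq_lam_one μ h)
      rw [show eval (-1) (cyclotomic (2 * 1) ℤ) = 0 by simp]
      exact zero_pow h0
  · intro h
    exact absurd (lam_mem n 1 odd_one) h
end
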